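/- A finite partial order P is a unit interval order if and only if P is (3+1)-free and (2+2)-free; that is, if and only if there do not exist elements a, b, c, d of P with a <_P b <_P c and d incomparable to each of a, b, c, and there do not exist elements a, b, c, d of P with a <_P b, c <_P d, and each of a, b incomparable to each of c, d. -/

import Mathlib

/-- Two elements of a poset are incomparable. -/
def Incomparable {α : Type*} [PartialOrder α] (x y : α) : Prop :=
  x ≠ y ∧ ¬ x ≤ y ∧ ¬ y ≤ x


def Below {α : Type*} [PartialOrder α] (x y : α) : Prop :=
  (∀ z, z < x → z < y) ∧ (∀ z, y < z → x < z)

lemma below_total {α : Type*} [PartialOrder α]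
    (h1 : ¬ ∃ a b c d : α, a < b ∧ b < c ∧
          Incomparable d a ∧ Incomparable d b ∧ Incomparable d c)
    (h2 : ¬ ∃ a b c d : α, a < b ∧ c < d ∧
          Incomparable a c ∧ Incomparable a d ∧ Incomparable b c ∧ Incomparable b d)
    (x y : α) : Below x y ∨ Below y x := by
  have inc : ∀ a b : α, ¬ a ≤ b → ¬ b ≤ a → Incomparable a b :=
    fun a b h h' => ⟨fun e => h e.le, h, h'⟩
  have t31 : ∀ a b c d : α, a < b → b < c → ¬ a < d → ¬ d < c → False := by
    intro a b c d hab hbc had hdc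
    refine h1 ⟨a, b, c, d, hab, hbc, inc _ _ ?_ ?_, inc _ _ ?_ ?_, inc _ _ ?_ ?_⟩
    · exact fun h => hdc (h.trans_lt (hab.trans hbc))
    · intro h
      rcases h.lt_or_eq with h | h
      · exact had h
      · exact hdc (h ▸ hab.trans hbc)
    · exact fun h => hdc (h.trans_lt hbc)
    · exact fun h => had (hab.trans_le h)
    · intro h
      rcases h.lt_or_eq with h | h
      · exact hdc h
      · exact had (h ▸ hab.trans hbc)
    · exact fun h => had ((hab.trans hbc).trans_le h)
  have t22 : ∀ a b c d : α, a < b → c < d → ¬ a < d → ¬ c < b → False := by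
    intro a b c d hab hcd had hcb
    refine h2 ⟨a, b, c, d, hab, hcd, inc _ _ ?_ ?_, inc _ _ ?_ ?_, inc _ _ ?_ ?_, inc _ _ ?_ ?_⟩
    · exact fun h => had (h.trans_lt hcd)
    · exact fun h => hcb (h.trans_lt hab)
    · intro h
      rcases h.lt_or_eq with h | h
      · exact had h
      · exact hcb (hcd.trans (h ▸ hab))
    · exact fun h => hcb (hcd.trans_le h |>.trans hab)
    · exact fun h => had (hab.trans_le h |>.trans hcd)
    · intro h
      rcases h.lt_or_eq with h | h
      · exact hcb h
      · exact had (hab.trans (h ▸ hcd))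
    · exact fun h => had (hab.trans_le h)
    · exact fun h => hcb (hcd.trans_le h)
  by_contra hcon
  simp only [Below, not_or, not_and_or, not_forall] at hcon
  obtain ⟨⟨z, hz, hz'⟩ | ⟨z, hz, hz'⟩, ⟨w, hw, hw'⟩ | ⟨w, hw, hw'⟩⟩ := hcon
  · exact t22 _ _ _ _ hz hw hz' hw'
  · exact t31 _ _ _ _ hz hw hz' hw'
  · exact t31 _ _ _ _ hw hz hw' hz'
  · exact t22 _ _ _ _ hz hw hw' hz'

open Classical in
lemma exists_rank {α : Type*} [Fintype α] [PartialOrder α]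
    (ht : ∀ x y : α, Below x y ∨ Below y x) :
    ∃ f : α → ℤ, ∀ x y, f x ≤ f y → Below x y := by
  refine ⟨fun x => ((Finset.univ.filter (· < x)).card : ℤ) -
    ((Finset.univ.filter (x < ·)).card : ℤ), fun x y hxy => ?_⟩
  rcases ht x y with h | h
  · exact h
  have s1 : Finset.univ.filter (· < y) ⊆ Finset.univ.filter (· < x) := by
    intro z hz; simp at hz ⊢; exact h.1 z hz
  have s2 : Finset.univ.filter (x < ·) ⊆ Finset.univ.filter (y < ·) := by
    intro z hz; simp at hz ⊢; exact h.2 z hz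
  have c1 := Finset.card_le_card s1
  have c2 := Finset.card_le_card s2
  have e1 := Finset.eq_of_subset_of_card_le s1 (by simp only at hxy; omega)
  have e2 := Finset.eq_of_subset_of_card_le s2 (by simp only at hxy; omega)
  constructor
  · intro z hz
    have : z ∈ Finset.univ.filter (· < y) := by rw [e1]; simpa using hz
    simpa using this
  · intro z hz
    have : z ∈ Finset.univ.filter (x < ·) := by rw [e2]; simpa using hz
    simpa using this

open Classical in
lemma exists_rep {α : Type*} [Fintype α] [PartialOrder α]
    (f : α → ℤ) (hf : ∀ x y, f x ≤ f y → Below x y) (S : Finset α) :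
    ∃ q : α → ℝ, ∀ x ∈ S, ∀ y ∈ S, (x < y → q x + 1 < q y) ∧ (¬ x < y → q y < q x + 1) ∧
      (¬ Below y x → q x < q y) := by
  induction S using Finset.induction_on_max_value f with
  | empty => exact ⟨fun _ => 0, by simp⟩
  | insert k S hk hmax ih =>
    obtain ⟨q, hq⟩ := ih
    have hb : ∀ x ∈ S, Below x k := fun x hx => hf _ _ (hmax x hx)
    obtain ⟨m, hlo, hhi⟩ := Order.exists_between_finsets
      (S.image q ∪ (S.filter (· < k)).image (fun x => q x + 1))
      ((S.filter (fun x => ¬ x < k)).image (fun x => q x + 1)) (by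
        intro a ha b hb'
        simp only [Finset.mem_union, Finset.mem_image, Finset.mem_filter] at ha hb'
        obtain ⟨y, ⟨hy, hyk⟩, rfl⟩ := hb'
        rcases ha with ⟨x, hx, rfl⟩ | ⟨x, ⟨hx, hxk⟩, rfl⟩
        · exact (hq y hy x hx).2.1 fun h => hyk ((hb x hx).1 _ h)
        · have := (hq x hx y hy).2.2 fun h => hyk (h.2 _ hxk)
          linarith)
    have A : ∀ x ∈ S, q x < m := fun x hx =>
      hlo _ (Finset.mem_union_left _ (Finset.mem_image_of_mem _ hx))
    have B : ∀ x ∈ S, x < k → q x + 1 < m := fun x hx h =>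
      hlo _ (Finset.mem_union_right _ (Finset.mem_image.2 ⟨x, by simp [hx, h], rfl⟩))
    have C : ∀ x ∈ S, ¬ x < k → m < q x + 1 := fun x hx h =>
      hhi _ (Finset.mem_image.2 ⟨x, by simp [hx, h], rfl⟩)
    refine ⟨Function.update q k m, ?_⟩
    have ne : ∀ x ∈ S, x ≠ k := fun x hx e => hk (e ▸ hx)
    intro x hx0 y hy0
    rcases Finset.mem_insert.1 hx0 with rfl | hx
    · rcases Finset.mem_insert.1 hy0 with rfl | hy
      · simp [Below]
      · rw [Function.update_self, Function.update_of_ne (ne y hy)]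
        refine ⟨fun h => absurd ((hb y hy).2 _ h) (lt_irrefl _), fun _ => ?_,
          fun h => absurd (hb y hy) h⟩
        linarith [A y hy]
    · rcases Finset.mem_insert.1 hy0 with rfl | hy
      · rw [Function.update_self, Function.update_of_ne (ne x hx)]
        exact ⟨B x hx, C x hx, fun _ => A x hx⟩
      · rw [Function.update_of_ne (ne x hx), Function.update_of_ne (ne y hy)]
        exact hq x hx y hy

/-- A finite partial order is a unit interval order iff it is (3+1)-free and (2+2)-free. -/
theorem unitIntervalOrder_iff_three_plus_one_free_and_two_plus_two_free
    {α : Type*} [Fintype α] [PartialOrder α] :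
    (∃ q : α → ℝ, ∀ i j : α, i < j ↔ q i + 1 < q j) ↔
      ((¬ ∃ a b c d : α, a < b ∧ b < c ∧
          Incomparable d a ∧ Incomparable d b ∧ Incomparable d c) ∧
       (¬ ∃ a b c d : α, a < b ∧ c < d ∧
          Incomparable a c ∧ Incomparable a d ∧ Incomparable b c ∧ Incomparable b d)) := by
  constructor
  · rintro ⟨q, hq⟩
    constructor
    · rintro ⟨a, b, c, d, hab, hbc, hda, hdb, hdc⟩
      have e1 := (hq _ _).1 hab
      have e2 := (hq _ _).1 hbc
      have e3 := mt (hq a d).2 fun h => hda.2.2 h.le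
      have e4 := mt (hq d c).2 fun h => hdc.2.1 h.le
      linarith
    · rintro ⟨a, b, c, d, hab, hcd, hac, had, hbc, hbd⟩
      have e1 := (hq _ _).1 hab
      have e2 := (hq _ _).1 hcd
      have e3 := mt (hq a d).2 fun h => had.2.1 h.le
      have e4 := mt (hq c b).2 fun h => hbc.2.2 h.le
      linarith
  · rintro ⟨h1, h2⟩
    obtain ⟨f, hf⟩ := exists_rank (below_total h1 h2)
    obtain ⟨q, hq⟩ := exists_rep f hf Finset.univ
    refine ⟨q, fun i j => ⟨(hq i (Finset.mem_univ _) j (Finset.mem_univ _)).1, fun h => ?_⟩⟩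
    by_contra hn
    have := (hq i (Finset.mem_univ _) j (Finset.mem_univ _)).2.1 hn
    linarith
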